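/- Lemma 4.4 (block structure of Ḟ_𝔥 and the O'Neill matrix): In the reduction setting, let P_𝔥(t), P_𝔳(t) be the projections onto 𝔥(t) and 𝔳(t) associated with V = 𝔥(t) ⊕ 𝔳(t) ⊕ h(t), and set F_𝔥(t) = P_𝔥(t)∘F(t). Then t ↦ F_𝔥(t) is smooth, and in the basis (a_1(t),…,a_n(t),H_1(t),…,H_n(t)) of V the matrix of its derivative Ḟ_𝔥(t) has the block form [[−C₁(t), C₂(t)],[O, C₁(t)]], where C₁(t) is the matrix of P_𝔥(t)|_{ℓ(t)} in the basis (a_i(t)); explicitly, Ḟ_𝔥(t)a_j(t) = −P_𝔥(t)a_j(t) and Ḟ_𝔥(t)H_j(t) = Σ_i a_i(t)(C₂(t))_{ij} + Σ_i H_i(t)(C₁(t))_{ij} for some n×n matrix C₂(t). Moreover: (1) C₂(t)·W(t)^{-1} is a symmetric matrix; (2) Σ_i a_i(t)(C₂(t))_{ij} = P_𝔳(t)ȧ_j(t) for j ≤ k and Σ_i a_i(t)(C₂(t))_{ij} = −P_𝔥(t)ȧ_j(t) for j > k. -/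

import Mathlib

/-- The symplectic orthogonal `S^ω = {u : ω(u, s) = 0 for all s ∈ S}` of a subspace. -/
def sympOrtho {V : Type*} [AddCommGroup V] [Module ℝ V]
    (ω : V →ₗ[ℝ] V →ₗ[ℝ] ℝ) (S : Submodule ℝ V) : Submodule ℝ V where
  carrier := {u | ∀ s ∈ S, ω u s = 0}
  add_mem' := fun ha hb s hs => by
    simp only [map_add, LinearMap.add_apply, ha s hs, hb s hs, add_zero]
  zero_mem' := fun s hs => by simp
  smul_mem' := fun c a ha s hs => by
    simp only [map_smul, LinearMap.smul_apply, ha s hs, smul_zero]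

/-! Because `F` kills the frame and shifts `ȧ_i` to `a_i`, a curve of endomorphisms `G` with
`G a_i = 0` and `G ȧ_i = c_i a_i` (`c_i` constant) satisfies `Ġ a_i = -c_i a_i`,
`Ġ ȧ_i = c_i ȧ_i - G ä_i` and `Ġ F = -G`. For `G = F` this gives `H_i = ȧ_i - ½ F ä_i`, and then
`Ġ H_j = ½ (c_j F ä_j - G ä_j) + c_j H_j`. The first summand is the `j`-th column of `C₂`, and
pairing it with `ȧ_i` gives `(W C₂)_{ij} = ½ (c_j - c_i) ω(a_i, ä_j)`. This is symmetric: where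
`c_i ≠ c_j` the Wronskian entries `W_{ij} = W_{ji}` vanish identically, and the sum of their
derivatives is `ω(a_i, ä_j) + ω(a_j, ä_i)`. The lemma is the case of weights `c_i ∈ {0, 1}`.
-/

section Algebra

variable {R V ι : Type*} [CommRing R] [AddCommGroup V] [Module R V]

/-- The matrix `ω(a_i, a'_j)`; it is the Wronskian matrix of a Lagrangian frame `a` when `a'` is the
derivative of `a`. -/
def wronskian (ω : V →ₗ[R] V →ₗ[R] R) (a a' : ι → V) : Matrix ι ι R :=
  .of fun i j => ω (a i) (a' j)

/-- `G` is the composition of the fundamental endomorphism of a frame `a` with derivative `a'` and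
an endomorphism with eigenvectors `a i` of eigenvalues `c i`. The fundamental endomorphism itself
has weights `1`; composing it with the projection onto the span of some of the `a i` yields weights
`0` and `1`. -/
structure IsWeightedFundamental (a a' : ι → V) (c : ι → R) (G : V →ₗ[R] V) : Prop where
  map_frame : ∀ i, G (a i) = 0
  map_deriv : ∀ i, G (a' i) = c i • a i

variable {a a' : ι → V} {c d : ι → R} {F G K P : V →ₗ[R] V} {ω : V →ₗ[R] V →ₗ[R] R}

theorem sum_smul_eq_smul_of_linearIndependent [Fintype ι] (ha : LinearIndependent R a)
    {x : ι → R} {r : R} {j : ι} (hx : ∑ i, x i • a i = r • a j) (b : ι → V) :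
    ∑ i, x i • b i = r • b j := by
  classical
  have hx_single : x = Pi.single j r := ha.fintypeLinearCombination_injective <| by
    simpa [Fintype.linearCombination_apply, Pi.single_apply] using hx
  simp [hx_single, Pi.single_apply]

theorem isSymm_mul_inv_of_isSymm_mul [Fintype ι] [DecidableEq ι] {M N : Matrix ι ι R}
    (hM : M.IsSymm) (hM_unit : IsUnit M) (hMN : (M * N).IsSymm) : (N * M⁻¹).IsSymm := by
  have hM_det : IsUnit M.det := (Matrix.isUnit_iff_isUnit_det M).mp hM_unit
  have hconj : N * M⁻¹ = M⁻¹ * (M * N) * M⁻¹ := by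
    rw [Matrix.nonsing_inv_mul_cancel_left _ _ hM_det]
  rw [Matrix.IsSymm, hconj, Matrix.transpose_mul, Matrix.transpose_mul, hMN.eq, hM.inv.eq,
    ← Matrix.mul_assoc]

theorem wronskian_mul_apply [Fintype ι] (hW : (wronskian ω a a').IsSymm) (C : Matrix ι ι R)
    (i j : ι) : (wronskian ω a a' * C) i j = ω (∑ l, C l j • a l) (a' i) := by
  simp only [Matrix.mul_apply, map_sum, map_smul, LinearMap.sum_apply, LinearMap.smul_apply,
    smul_eq_mul]
  exact Finset.sum_congr rfl fun l _ => by rw [← hW.apply, mul_comm]; rfl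

namespace IsWeightedFundamental

theorem comp (hF : IsWeightedFundamental a a' 1 F) (hP : ∀ i, P (a i) = c i • a i) :
    IsWeightedFundamental a a' c (P ∘ₗ F) where
  map_frame i := by simp [hF.map_frame]
  map_deriv i := by simp [hF.map_deriv, hP]

theorem add (hG : IsWeightedFundamental a a' c G) (hK : IsWeightedFundamental a a' d K) :
    IsWeightedFundamental a a' (c + d) (G + K) where
  map_frame i := by simp [hG.map_frame, hK.map_frame]
  map_deriv i := by simp [hG.map_deriv, hK.map_deriv, add_smul]

theorem unique (hspan : Submodule.span R (Set.range (Sum.elim a a')) = ⊤)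
    (hG : IsWeightedFundamental a a' c G) (hK : IsWeightedFundamental a a' c K) : G = K :=
  LinearMap.ext_on_range hspan <| Sum.rec
    (fun i => (hG.map_frame i).trans (hK.map_frame i).symm)
    (fun i => (hG.map_deriv i).trans (hK.map_deriv i).symm)

theorem apply_mem_span (hspan : Submodule.span R (Set.range (Sum.elim a a')) = ⊤)
    (hG : IsWeightedFundamental a a' c G) (v : V) :
    G v ∈ Submodule.span R (Set.range a) := by
  suffices h : Submodule.span R (Set.range (Sum.elim a a')) ≤
      (Submodule.span R (Set.range a)).comap G from h (hspan ▸ Submodule.mem_top)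
  rw [Submodule.span_le]
  rintro _ ⟨i | i, rfl⟩
  · simp [hG.map_frame]
  · simpa [hG.map_deriv] using
      Submodule.smul_mem _ (c i) (Submodule.subset_span (Set.mem_range_self i))

theorem exists_matrix_sum_smul_eq [Fintype ι]
    (hspan : Submodule.span R (Set.range (Sum.elim a a')) = ⊤)
    (hF : IsWeightedFundamental a a' d F) (hG : IsWeightedFundamental a a' c G)
    (r : R) (a'' : ι → V) :
    ∃ C : Matrix ι ι R, ∀ j, ∑ i, C i j • a i = r • (c j • F (a'' j) - G (a'' j)) := by
  have hmem (j : ι) : r • (c j • F (a'' j) - G (a'' j)) ∈ Submodule.span R (Set.range a) :=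
    Submodule.smul_mem _ _ <| Submodule.sub_mem _
      (Submodule.smul_mem _ _ (hF.apply_mem_span hspan _)) (hG.apply_mem_span hspan _)
  simp only [Submodule.mem_span_range_iff_exists_fun] at hmem
  choose x hx using hmem
  exact ⟨.of fun i j => x j i, hx⟩

theorem smul_sub_eq_of_complementary {Q : V →ₗ[R] V}
    (hspan : Submodule.span R (Set.range (Sum.elim a a')) = ⊤)
    (hF : IsWeightedFundamental a a' 1 F) (hP : ∀ i, P (a i) = c i • a i)
    (hQ : ∀ i, Q (a i) = (1 - c i) • a i) {r s : R} {u v : V}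
    (hPu : P (u - r • F v) = 0) (hQu : Q (u - r • F v) = 0) :
    r • (s • F v - P (F v)) = s • Q u - (1 - s) • P u := by
  have hPQ : P ∘ₗ F + Q ∘ₗ F = F :=
    unique hspan (add_sub_cancel c 1 ▸ (hF.comp hP).add (hF.comp hQ)) hF
  have hPQ_v : P (F v) + Q (F v) = F v := LinearMap.congr_fun hPQ v
  rw [map_sub, map_smul, sub_eq_zero] at hPu hQu
  rw [hPu, hQu]
  nth_rw 1 [← hPQ_v]
  module

theorem form_apply_deriv (hspan : Submodule.span R (Set.range (Sum.elim a a')) = ⊤)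
    (hG : IsWeightedFundamental a a' c G) (hLag : ∀ i j, ω (a i) (a j) = 0)
    (hW : (wronskian ω a a').IsSymm) (hblock : ∀ i j, c i ≠ c j → ω (a i) (a' j) = 0)
    (v : V) (i : ι) :
    ω (G v) (a' i) = c i * ω (a i) v := by
  suffices h : ω.flip (a' i) ∘ₗ G = c i • ω (a i) from LinearMap.congr_fun h v
  refine LinearMap.ext_on_range hspan <| Sum.rec (fun j => ?_) (fun j => ?_)
  · simp [hG.map_frame, hLag]
  · have hsymm : ω (a j) (a' i) = ω (a i) (a' j) := hW.apply i j
    by_cases hc : c i = c j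
    · simp [hG.map_deriv, hc, hsymm]
    · simp [hG.map_deriv, hsymm, hblock i j hc]

theorem isSymm_wronskian_mul [Fintype ι]
    (hspan : Submodule.span R (Set.range (Sum.elim a a')) = ⊤)
    (hF : IsWeightedFundamental a a' 1 F) (hG : IsWeightedFundamental a a' c G)
    (hLag : ∀ i j, ω (a i) (a j) = 0) (hW : (wronskian ω a a').IsSymm)
    (hblock : ∀ i j, c i ≠ c j → ω (a i) (a' j) = 0)
    {a'' : ι → V} (hanti : ∀ i j, c i ≠ c j → ω (a i) (a'' j) + ω (a j) (a'' i) = 0)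
    {r : R} {C : Matrix ι ι R}
    (hC : ∀ j, ∑ i, C i j • a i = r • (c j • F (a'' j) - G (a'' j))) :
    (wronskian ω a a' * C).IsSymm := by
  have hentry (i j : ι) :
      (wronskian ω a a' * C) i j = r * (c j - c i) * ω (a i) (a'' j) := by
    rw [wronskian_mul_apply hW, hC]
    simp only [map_smul, map_sub, LinearMap.smul_apply, LinearMap.sub_apply, smul_eq_mul,
      hF.form_apply_deriv hspan hLag hW (fun _ _ h => absurd rfl h),
      hG.form_apply_deriv hspan hLag hW hblock, Pi.one_apply]
    ring
  refine .ext fun i j => ?_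
  rw [hentry, hentry]
  by_cases hc : c i = c j
  · simp [hc]
  · linear_combination r * (c i - c j) * hanti i j hc

end IsWeightedFundamental

end Algebra

theorem isUnit_wronskian {𝕜 V ι : Type*} [Field 𝕜] [AddCommGroup V] [Module 𝕜 V] [Fintype ι]
    [DecidableEq ι] {ω : V →ₗ[𝕜] V →ₗ[𝕜] 𝕜} {a a' : ι → V} (hω : ω.SeparatingLeft)
    (hindep : LinearIndependent 𝕜 a) (hspan : Submodule.span 𝕜 (Set.range (Sum.elim a a')) = ⊤)
    (hLag : ∀ i j, ω (a i) (a j) = 0) : IsUnit (wronskian ω a a') := by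
  refine Matrix.vecMul_injective_iff_isUnit.mp <|
    (injective_iff_map_eq_zero (wronskian ω a a').vecMulLinear).mpr fun x hx => ?_
  have hform : ω (∑ i, x i • a i) = 0 :=
    LinearMap.ext_on_range hspan <| Sum.rec (fun j => by simp [hLag]) fun j => by
      simpa [Matrix.vecMul, dotProduct, wronskian] using congrFun hx j
  have hcomb : ∑ i, x i • a i = 0 := hω _ (LinearMap.congr_fun hform)
  exact funext (Fintype.linearIndependent_iff.mp hindep x hcomb)

section Calculus

variable {𝕜 V ι : Type*} [NontriviallyNormedField 𝕜] [NormedAddCommGroup V]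
  [NormedSpace 𝕜 V]

theorem contDiff_clm_of_basis [CompleteSpace 𝕜] [Finite ι] {E X : Type*}
    [NormedAddCommGroup E] [NormedSpace 𝕜 E] [NormedAddCommGroup X] [NormedSpace 𝕜 X]
    {r : WithTop ℕ∞} {G : E → V →L[𝕜] X}
    (b : E → Module.Basis ι 𝕜 V) (hb : ∀ i, ContDiff 𝕜 r fun t => b t i)
    (hG : ∀ i, ContDiff 𝕜 r fun t => G t (b t i)) : ContDiff 𝕜 r G := by
  cases nonempty_fintype ι
  let e (t : E) : (ι → 𝕜) ≃L[𝕜] V := (b t).equivFun.symm.toContinuousLinearEquiv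
  have he_apply (t : E) (x : ι → 𝕜) : e t x = ∑ i, x i • b t i := (b t).equivFun_symm_apply x
  have he : ContDiff 𝕜 r fun t => (e t : (ι → 𝕜) →L[𝕜] V) := by
    refine contDiff_clm_apply_iff.mpr fun x => ?_
    simp only [ContinuousLinearEquiv.coe_coe, he_apply]
    fun_prop
  have hGe : ContDiff 𝕜 r fun t => G t ∘L (e t : (ι → 𝕜) →L[𝕜] V) := by
    refine contDiff_clm_apply_iff.mpr fun x => ?_
    simp only [ContinuousLinearMap.comp_apply, ContinuousLinearEquiv.coe_coe, he_apply, map_sum,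
      map_smul]
    exact ContDiff.sum fun i _ => (hG i).const_smul (x i)
  have he_symm : ContDiff 𝕜 r fun t => ((e t).symm : V →L[𝕜] ι → 𝕜) := by
    simp only [← ContinuousLinearMap.inverse_equiv]
    exact contDiff_iff_contDiffAt.mpr fun t =>
      (contDiffAt_map_inverse (e t)).comp (f := fun t => (e t : (ι → 𝕜) →L[𝕜] V)) t he.contDiffAt
  convert hGe.clm_comp he_symm using 2 with t
  ext v
  simp

theorem contDiff_of_hasDerivAt_of_contDiff_add_one {r : WithTop ℕ∞} {f f' : 𝕜 → V}
    (hf : ContDiff 𝕜 (r + 1) f) (hf' : ∀ t, HasDerivAt f (f' t) t) : ContDiff 𝕜 r f' := by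
  rw [← funext fun t => (hf' t).deriv]
  exact (contDiff_succ_iff_deriv.mp hf).2.2

theorem form_deriv_add_eq_zero [CompleteSpace 𝕜] [FiniteDimensional 𝕜 V]
    {ω : V →ₗ[𝕜] V →ₗ[𝕜] 𝕜} {f g : 𝕜 → V} {f' g' : V} {t : 𝕜}
    (hf : HasDerivAt f f' t) (hg : HasDerivAt g g' t)
    (hfg : ∀ s, ω (f s) (g s) = 0) : ω f' (g t) + ω (f t) g' = 0 := by
  have h := (ω.toContinuousBilinearMap.hasFDerivAt.comp_hasDerivAt t hf).clm_apply hg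
  simp only [Function.comp_apply, LinearMap.toContinuousBilinearMap_apply, hfg] at h
  exact h.unique (hasDerivAt_const t 0)

section Frame

variable {ω : V →ₗ[𝕜] V →ₗ[𝕜] 𝕜} {A A' : 𝕜 → ι → V} {c : ι → 𝕜} {t : 𝕜}

theorem isSymm_wronskian_of_lagrangian [CompleteSpace 𝕜] [FiniteDimensional 𝕜 V] (hω : ω.IsAlt)
    (hA : ∀ i, HasDerivAt (A · i) (A' t i) t) (hLag : ∀ s i j, ω (A s i) (A s j) = 0) :
    (wronskian ω (A t) (A' t)).IsSymm := by
  refine .ext fun i j => ?_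
  have h := form_deriv_add_eq_zero (hA i) (hA j) fun s => hLag s i j
  rw [← hω.neg, neg_add_eq_zero] at h
  exact h

theorem form_second_deriv_add_eq_zero [CompleteSpace 𝕜] [FiniteDimensional 𝕜 V] (hω : ω.IsAlt)
    {i j : ι} {ai'' aj'' : V} (hAi : HasDerivAt (A · i) (A' t i) t)
    (hAj : HasDerivAt (A · j) (A' t j) t) (hAi' : HasDerivAt (A' · i) ai'' t)
    (hAj' : HasDerivAt (A' · j) aj'' t) (hW : ∀ s, (wronskian ω (A s) (A' s)).IsSymm)
    (hij : ∀ s, ω (A s i) (A' s j) = 0) : ω (A t i) aj'' + ω (A t j) ai'' = 0 := by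
  have h_ij := form_deriv_add_eq_zero hAi hAj' hij
  have h_ji := form_deriv_add_eq_zero hAj hAi' fun s => ((hW s).apply i j).trans (hij s)
  linear_combination h_ij + h_ji + hω.neg (A' t i) (A' t j)

namespace IsWeightedFundamental

variable {F G : 𝕜 → V →L[𝕜] V} {F' G' : V →L[𝕜] V}

theorem contDiff [CompleteSpace 𝕜] [Finite ι] {r : WithTop ℕ∞}
    (hG : ∀ s, IsWeightedFundamental (A s) (A' s) c (G s))
    (hfan : ∀ s, LinearIndependent 𝕜 (Sum.elim (A s) (A' s)) ∧
      Submodule.span 𝕜 (Set.range (Sum.elim (A s) (A' s))) = ⊤)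
    (hA : ∀ i, ContDiff 𝕜 r (A · i)) (hA' : ∀ i, ContDiff 𝕜 r (A' · i)) : ContDiff 𝕜 r G := by
  have hG_frame (s : 𝕜) (i : ι) : G s (A s i) = 0 := (hG s).map_frame i
  have hG_deriv (s : 𝕜) (i : ι) : G s (A' s i) = c i • A s i := (hG s).map_deriv i
  refine contDiff_clm_of_basis (fun s => .mk (hfan s).1 (hfan s).2.ge) ?_ ?_ <;> rintro (i | i)
  · simpa using hA i
  · simpa using hA' i
  · simpa [hG_frame] using contDiff_const
  · simpa [hG_deriv] using (hA i).const_smul (c i)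

theorem deriv_apply_frame {i : ι} (hG : ∀ s, IsWeightedFundamental (A s) (A' s) c (G s))
    (hG' : HasDerivAt G G' t) (hA : HasDerivAt (A · i) (A' t i) t) :
    G' (A t i) = -(c i • A t i) := by
  have hG_frame (s : 𝕜) : G s (A s i) = 0 := (hG s).map_frame i
  have hG_deriv : G t (A' t i) = c i • A t i := (hG t).map_deriv i
  have h := hG'.clm_apply hA
  simp only [hG_frame, hG_deriv] at h
  exact eq_neg_of_add_eq_zero_left (h.unique (hasDerivAt_const t 0))

theorem deriv_apply_deriv {i : ι} {a'' : V}
    (hG : ∀ s, IsWeightedFundamental (A s) (A' s) c (G s)) (hG' : HasDerivAt G G' t)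
    (hA : HasDerivAt (A · i) (A' t i) t) (hA' : HasDerivAt (A' · i) a'' t) :
    G' (A' t i) = c i • A' t i - G t a'' := by
  have hG_deriv (s : 𝕜) : G s (A' s i) = c i • A s i := (hG s).map_deriv i
  have h := hG'.clm_apply hA'
  simp only [hG_deriv] at h
  exact eq_sub_of_add_eq (h.unique (hA.const_smul (c i)))

theorem deriv_comp_fundamental (hF : IsWeightedFundamental (A t) (A' t) (1 : ι → 𝕜) (F t))
    (hG : ∀ s, IsWeightedFundamental (A s) (A' s) c (G s)) (hG' : HasDerivAt G G' t)
    (hA : ∀ i, HasDerivAt (A · i) (A' t i) t)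
    (hspan : Submodule.span 𝕜 (Set.range (Sum.elim (A t) (A' t))) = ⊤) (v : V) :
    G' (F t v) = -G t v := by
  have hG_neg : IsWeightedFundamental (A t) (A' t) c ((-(G' : V →ₗ[𝕜] V)) ∘ₗ F t) :=
    hF.comp fun i => neg_eq_iff_eq_neg.mpr (deriv_apply_frame hG hG' (hA i))
  exact neg_eq_iff_eq_neg.mp (LinearMap.congr_fun (hG_neg.unique hspan (hG t)) v)

theorem half_add_deriv_apply [CharZero 𝕜] {i : ι} {a'' : V}
    (hF : ∀ s, IsWeightedFundamental (A s) (A' s) (1 : ι → 𝕜) (F s)) (hF' : HasDerivAt F F' t)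
    (hA : HasDerivAt (A · i) (A' t i) t) (hA' : HasDerivAt (A' · i) a'' t) :
    (1 / 2 : 𝕜) • (A' t i + F' (A' t i)) = A' t i - (1 / 2 : 𝕜) • F t a'' := by
  rw [deriv_apply_deriv hF hF' hA hA', Pi.one_apply]
  module

theorem deriv_apply_horizontal [CharZero 𝕜] {i : ι} {a'' : V}
    (hF : IsWeightedFundamental (A t) (A' t) (1 : ι → 𝕜) (F t))
    (hG : ∀ s, IsWeightedFundamental (A s) (A' s) c (G s)) (hG' : HasDerivAt G G' t)
    (hA : ∀ j, HasDerivAt (A · j) (A' t j) t) (hA' : HasDerivAt (A' · i) a'' t)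
    (hspan : Submodule.span 𝕜 (Set.range (Sum.elim (A t) (A' t))) = ⊤) :
    G' (A' t i - (1 / 2 : 𝕜) • F t a'') =
      (1 / 2 : 𝕜) • (c i • F t a'' - G t a'') + c i • (A' t i - (1 / 2 : 𝕜) • F t a'') := by
  rw [map_sub, map_smul, deriv_apply_deriv hG hG' (hA i) hA',
    deriv_comp_fundamental hF hG hG' hA hspan]
  module

end IsWeightedFundamental

end Frame

end Calculus

theorem lemma4_4_oneill_matrix_general {𝕜 V ι : Type*} [NontriviallyNormedField 𝕜]
    [CompleteSpace 𝕜] [CharZero 𝕜] [NormedAddCommGroup V] [NormedSpace 𝕜 V] [Fintype ι]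
    [DecidableEq ι] {ω : V →ₗ[𝕜] V →ₗ[𝕜] 𝕜} (halt : ω.IsAlt) (hnd : ω.SeparatingLeft)
    {r : WithTop ℕ∞} (hr : r ≠ 0) {A A' : 𝕜 → ι → V} (hA : ∀ i, ContDiff 𝕜 (r + 1) (A · i))
    (hA' : ∀ i t, HasDerivAt (A · i) (A' t i) t)
    (hfan : ∀ t, LinearIndependent 𝕜 (Sum.elim (A t) (A' t)) ∧
      Submodule.span 𝕜 (Set.range (Sum.elim (A t) (A' t))) = ⊤)
    (hLag : ∀ t i j, ω (A t i) (A t j) = 0) {F F' : 𝕜 → V →L[𝕜] V}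
    (hF0 : ∀ t i, F t (A t i) = 0) (hF1 : ∀ t i, F t (A' t i) = A t i)
    (hFd : ∀ t, HasDerivAt F (F' t) t) {H : 𝕜 → ι → V}
    (hH : ∀ t j, H t j = (1 / 2 : 𝕜) • (A' t j + F' t (A' t j))) {c : ι → 𝕜}
    (hblock : ∀ t i j, c i ≠ c j → ω (A t i) (A' t j) = 0) {Ph Pv : 𝕜 → V →L[𝕜] V}
    (hPh : ∀ t j, Ph t (A t j) = c j • A t j) (hPhH : ∀ t j, Ph t (H t j) = 0)
    (hPv : ∀ t j, Pv t (A t j) = (1 - c j) • A t j) (hPvH : ∀ t j, Pv t (H t j) = 0) :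
    ContDiff 𝕜 r (fun t => Ph t ∘L F t) ∧
    ∃ (Fh' : 𝕜 → V →L[𝕜] V) (C₂ : 𝕜 → Matrix ι ι 𝕜),
      (∀ t, HasDerivAt (fun u => Ph u ∘L F u) (Fh' t) t) ∧
      (∀ t j, Fh' t (A t j) = -Ph t (A t j)) ∧
      (∀ t j, Fh' t (H t j) = ∑ i, C₂ t i j • A t i + c j • H t j) ∧
      (∀ t, (C₂ t * (wronskian ω (A t) (A' t))⁻¹).IsSymm) ∧
      (∀ t j, ∑ i, C₂ t i j • A t i = c j • Pv t (A' t j) - (1 - c j) • Ph t (A' t j)) := by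
  have : FiniteDimensional 𝕜 V :=
    (Module.Basis.mk (hfan 0).1 (hfan 0).2.ge).finiteDimensional_of_finite
  have hspan t := (hfan t).2
  have hA'_contDiff i : ContDiff 𝕜 r (A' · i) :=
    contDiff_of_hasDerivAt_of_contDiff_add_one (hA i) (hA' i)
  obtain ⟨A'', hA''⟩ : ∃ A'' : 𝕜 → ι → V, ∀ i t, HasDerivAt (A' · i) (A'' t i) t :=
    ⟨_, fun i t => ((hA'_contDiff i).differentiable hr t).hasDerivAt⟩
  have hF t : IsWeightedFundamental (A t) (A' t) (1 : ι → 𝕜) (F t) :=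
    ⟨hF0 t, fun i => by simpa using hF1 t i⟩
  have hG t : IsWeightedFundamental (A t) (A' t) c (Ph t ∘L F t) := (hF t).comp (hPh t)
  have hG_contDiff : ContDiff 𝕜 r fun t => Ph t ∘L F t :=
    IsWeightedFundamental.contDiff hG hfan (fun i => (hA i).of_le le_self_add) hA'_contDiff
  have hG' t := (hG_contDiff.differentiable hr t).hasDerivAt
  have hH_eq t j : H t j = A' t j - (1 / 2 : 𝕜) • F t (A'' t j) :=
    (hH t j).trans (IsWeightedFundamental.half_add_deriv_apply hF (hFd t) (hA' j t) (hA'' j t))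
  choose C₂ hC₂ using fun t =>
    (hF t).exists_matrix_sum_smul_eq (hspan t) (hG t) (1 / 2) (A'' t)
  have hW t : (wronskian ω (A t) (A' t)).IsSymm :=
    isSymm_wronskian_of_lagrangian halt (hA' · t) hLag
  refine ⟨hG_contDiff, _, C₂, hG', fun t j => ?_, fun t j => ?_,
    fun t => ?_, fun t j => ?_⟩
  · rw [IsWeightedFundamental.deriv_apply_frame hG (hG' t) (hA' j t), hPh]
  · rw [hH_eq, IsWeightedFundamental.deriv_apply_horizontal (hF t) hG (hG' t) (hA' · t)
      (hA'' j t) (hspan t), hC₂]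
    rfl
  · have hindep : LinearIndependent 𝕜 (A t) := (linearIndependent_sum.mp (hfan t).1).1
    refine isSymm_mul_inv_of_isSymm_mul (hW t) (isUnit_wronskian hnd hindep (hspan t) (hLag t)) ?_
    exact (hF t).isSymm_wronskian_mul (hspan t) (hG t) (hLag t) (hW t) (hblock t)
      (fun i j hij => form_second_deriv_add_eq_zero halt (hA' i t) (hA' j t) (hA'' i t)
        (hA'' j t) hW fun s => hblock s i j hij) (hC₂ t)
  · rw [hC₂]
    have hH_Ph := hPhH t j
    have hH_Pv := hPvH t j
    rw [hH_eq] at hH_Ph hH_Pv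
    exact (hF t).smul_sub_eq_of_complementary (hspan t) (hPh t) (hPv t) hH_Ph hH_Pv

/-- **Lemma 4.4.**  In the reduction setting, with `P_𝔥(t)`, `P_𝔳(t)` the projections
associated with `V = 𝔥(t) ⊕ 𝔳(t) ⊕ h(t)` and `F_𝔥(t) = P_𝔥(t)∘F(t)`, the curve
`t ↦ F_𝔥(t)` is differentiable and, in the basis `(a_i(t), H_i(t))`, its derivative has
the block form `[[−C₁(t), C₂(t)], [O, C₁(t)]]`, where `C₁(t)` is the matrix of
`P_𝔥(t)|_{ℓ(t)}`.  Moreover `C₂(t)·W(t)⁻¹` is symmetric, and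
`Σ_i a_i(t)(C₂(t))_{ij} = P_𝔳(t) ȧ_j(t)` for `j ≤ k`, `= −P_𝔥(t) ȧ_j(t)` for `j > k`. -/
theorem lemma4_4_oneill_matrix
    {V : Type*} [NormedAddCommGroup V] [NormedSpace ℝ V] [FiniteDimensional ℝ V]
    {n : ℕ} (hn : 0 < n) (hdim : Module.finrank ℝ V = 2 * n)
    (ω : V →ₗ[ℝ] V →ₗ[ℝ] ℝ)
    (halt : ∀ v, ω v v = 0)
    (hnd : ∀ v, (∀ w, ω v w = 0) → v = 0)
    (A A' : ℝ → Fin n → V)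
    (hA : ∀ i, ContDiff ℝ (⊤ : ℕ∞) (fun t => A t i))
    (hA' : ∀ i t, HasDerivAt (fun s => A s i) (A' t i) t)
    (hfan : ∀ t, LinearIndependent ℝ (Sum.elim (A t) (A' t)) ∧
      Submodule.span ℝ (Set.range (Sum.elim (A t) (A' t))) = ⊤)
    (hLag : ∀ t i j, ω (A t i) (A t j) = 0)
    (F F' : ℝ → V →L[ℝ] V)
    (hF0 : ∀ t i, F t (A t i) = 0)
    (hF1 : ∀ t i, F t (A' t i) = A t i)
    (hFd : ∀ t, HasDerivAt F (F' t) t)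
    (H : ℝ → Fin n → V)
    (hH : ∀ t j, H t j = (1/2 : ℝ) • (A' t j + F' t (A' t j)))
    -- the reduction setting
    (Wsub : Submodule ℝ V)
    (hco : sympOrtho ω Wsub ≤ Wsub)
    (k : ℕ) (hkn : k ≤ n)
    (hk : k + Module.finrank ℝ (sympOrtho ω Wsub) = n)
    (hmem : ∀ t (i : Fin n), (i : ℕ) < k → A t i ∈ Wsub)
    (hspan : ∀ t, Submodule.span ℝ {v | ∃ i : Fin n, (i : ℕ) < k ∧ v = A t i} =
      Submodule.span ℝ (Set.range (A t)) ⊓ Wsub)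
    (hblock : ∀ t (i j : Fin n), (i : ℕ) < k → k ≤ (j : ℕ) → ω (A t i) (A' t j) = 0)
    (hWkinv : ∀ t, IsUnit (Matrix.of fun i j : Fin k =>
      ω (A t (Fin.castLE hkn i)) (A' t (Fin.castLE hkn j))))
    -- the projections onto 𝔥(t) and 𝔳(t) relative to V = 𝔥(t) ⊕ 𝔳(t) ⊕ h(t)
    (Ph Pv : ℝ → V →L[ℝ] V)
    (hPh1 : ∀ t (j : Fin n), (j : ℕ) < k → Ph t (A t j) = A t j)
    (hPh2 : ∀ t (j : Fin n), k ≤ (j : ℕ) → Ph t (A t j) = 0)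
    (hPh3 : ∀ t j, Ph t (H t j) = 0)
    (hPv1 : ∀ t (j : Fin n), (j : ℕ) < k → Pv t (A t j) = 0)
    (hPv2 : ∀ t (j : Fin n), k ≤ (j : ℕ) → Pv t (A t j) = A t j)
    (hPv3 : ∀ t j, Pv t (H t j) = 0)
    -- the matrix of P_𝔥(t)|_{ℓ(t)} in the basis (a_i(t))
    (C₁ : ℝ → Matrix (Fin n) (Fin n) ℝ)
    (hC1 : ∀ t j, Ph t (A t j) = ∑ i, C₁ t i j • A t i)
    -- the Wronskian matrix
    (W : ℝ → Matrix (Fin n) (Fin n) ℝ)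
    (hW : ∀ t i j, W t i j = ω (A t i) (A' t j)) :
    ∃ (Fh' : ℝ → V →L[ℝ] V) (C₂ : ℝ → Matrix (Fin n) (Fin n) ℝ),
      (∀ t, HasDerivAt (fun u => (Ph u).comp (F u)) (Fh' t) t) ∧
      (∀ t j, Fh' t (A t j) = -(Ph t (A t j))) ∧
      (∀ t j, Fh' t (H t j) = ∑ i, C₂ t i j • A t i + ∑ i, C₁ t i j • H t i) ∧
      (∀ t, (C₂ t * (W t)⁻¹).transpose = C₂ t * (W t)⁻¹) ∧
      (∀ t (j : Fin n), (j : ℕ) < k → ∑ i, C₂ t i j • A t i = Pv t (A' t j)) ∧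
      (∀ t (j : Fin n), k ≤ (j : ℕ) → ∑ i, C₂ t i j • A t i = -(Ph t (A' t j))) := by
  let c : Fin n → ℝ := fun j => if (j : ℕ) < k then 1 else 0
  have hc_lt {j : Fin n} (hj : (j : ℕ) < k) : c j = 1 := if_pos hj
  have hc_ge {j : Fin n} (hj : k ≤ (j : ℕ)) : c j = 0 := if_neg hj.not_gt
  have hPh t j : Ph t (A t j) = c j • A t j := by
    rcases lt_or_ge (j : ℕ) k with hj | hj <;> simp [hc_lt, hc_ge, hPh1, hPh2, hj]
  have hPv t j : Pv t (A t j) = (1 - c j) • A t j := by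
    rcases lt_or_ge (j : ℕ) k with hj | hj <;> simp [hc_lt, hc_ge, hPv1, hPv2, hj]
  have hW_symm t := isSymm_wronskian_of_lagrangian halt (hA' · t) hLag
  have hblock_c t i j (hij : c i ≠ c j) : ω (A t i) (A' t j) = 0 := by
    rcases lt_or_ge (i : ℕ) k with hi | hi <;> rcases lt_or_ge (j : ℕ) k with hj | hj
    · exact absurd ((hc_lt hi).trans (hc_lt hj).symm) hij
    · exact hblock t i j hi hj
    · exact ((hW_symm t).apply j i).trans (hblock t j i hj hi)
    · exact absurd ((hc_ge hi).trans (hc_ge hj).symm) hij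
  obtain ⟨-, Fh', C₂, hFh', hFhA, hFhH, hC₂W, hC₂⟩ := lemma4_4_oneill_matrix_general halt hnd
    (r := (⊤ : ℕ∞)) (by simp) hA hA' hfan hLag hF0 hF1 hFd hH hblock_c hPh hPh3 hPv hPv3
  have hindep t : LinearIndependent ℝ (A t) := (linearIndependent_sum.mp (hfan t).1).1
  have hC₁ t j : ∑ i, C₁ t i j • H t i = c j • H t j :=
    sum_smul_eq_smul_of_linearIndependent (hindep t) ((hC1 t j).symm.trans (hPh t j)) (H t)
  have hW_eq t : W t = wronskian ω (A t) (A' t) := Matrix.ext (hW t)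
  exact ⟨Fh', C₂, hFh', hFhA, fun t j => hC₁ t j ▸ hFhH t j, fun t => hW_eq t ▸ hC₂W t,
    fun t j hj => by simpa [hc_lt hj] using hC₂ t j,
    fun t j hj => by simpa [hc_ge hj] using hC₂ t j⟩
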